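/- arXiv:2111.01654 — 3 statements merged into one kernel-verified Lean document; each statement's English description precedes it below -/
import Mathlib

section
/- Announcement–relativized-common-knowledge reduction axiom: for every epistemic model M, every group of agents G ⊆ A, every world w, and all formulas φ, ψ, χ, it holds that M,w ⊨ [!φ]C_G(χ | ψ) ↔ (φ → C_G(φ ∧ [!φ]χ | [!φ]ψ)). -/
/-- Syntax of public announcement logic with relativized common knowledge.
`Agent` is the set of agents, `AtomP` the set of atomic propositions. -/
inductive Form (Agent AtomP : Type) : Type
  | top  : Form Agent AtomP
  | atom : AtomP → Form Agent AtomP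
  | neg  : Form Agent AtomP → Form Agent AtomP
  | or   : Form Agent AtomP → Form Agent AtomP → Form Agent AtomP
  | know : Agent → Form Agent AtomP → Form Agent AtomP
  | ev   : Set Agent → Form Agent AtomP → Form Agent AtomP
  | ck   : Set Agent → Form Agent AtomP → Form Agent AtomP → Form Agent AtomP
  | ann  : Form Agent AtomP → Form Agent AtomP → Form Agent AtomP

namespace Form
variable {Agent AtomP : Type}
/-- φ ∧ ψ -/
def and (φ ψ : Form Agent AtomP) : Form Agent AtomP := .neg (.or (.neg φ) (.neg ψ))
/-- φ → ψ -/
def imp (φ ψ : Form Agent AtomP) : Form Agent AtomP := .or (.neg φ) ψ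
/-- φ ↔ ψ -/
def iff (φ ψ : Form Agent AtomP) : Form Agent AtomP := (φ.imp ψ).and (ψ.imp φ)
end Form

/-- Truth of a PAL formula at world `w` of the epistemic model given by the set of
worlds `W`, accessibility relations `R` and valuation `V`.  A public announcement
`[!φ]ψ` is evaluated in the updated model whose worlds are the subtype of worlds
satisfying `φ`, with accessibility relations and valuation restricted accordingly. -/
def Sat {Agent AtomP : Type} :
    Form Agent AtomP → (W : Type) → (Agent → W → W → Prop) → (AtomP → Set W) → W → Prop
  | .top, _, _, _, _ => True
  | .atom p, _, _, V, w => w ∈ V p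
  | .neg φ, W, R, V, w => ¬ Sat φ W R V w
  | .or φ ψ, W, R, V, w => Sat φ W R V w ∨ Sat ψ W R V w
  | .know i φ, W, R, V, w => ∀ v, R i w v → Sat φ W R V v
  | .ev G φ, W, R, V, w => ∀ v, (∃ i ∈ G, R i w v) → Sat φ W R V v
  | .ck G φ ψ, W, R, V, w =>
      ∀ v, Relation.TransGen (fun u u' => (∃ i ∈ G, R i u u') ∧ Sat φ W R V u') w v →
        Sat ψ W R V v
  | .ann φ ψ, W, R, V, w =>
      ∀ h : Sat φ W R V w,
        Sat ψ {v : W // Sat φ W R V v} (fun i x y => R i x.1 y.1)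
          (fun p => {x : {v : W // Sat φ W R V v} | x.1 ∈ V p}) ⟨w, h⟩

/-- A formula is valid iff it is true at every world of every epistemic model. -/
def Valid {Agent AtomP : Type} (φ : Form Agent AtomP) : Prop :=
  ∀ (W : Type), Nonempty W → ∀ (R : Agent → W → W → Prop) (V : AtomP → Set W) (w : W),
    Sat φ W R V w

/-!
The inclusion of the updated model into `M` is a bounded morphism from `R_G^χ`, computed after the
announcement, to `R_G^{φ ∧ [!φ]χ}`, computed before it: a step of the latter relation always ends in
a `φ`-world. Bounded morphisms stay bounded under transitive closure, so both common-knowledge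
formulas quantify over the same worlds.
-/

/-- A bounded morphism (p-morphism) from the frame `(α, r)` to the frame `(β, s)`. Read from
right to left, the equivalence is the forth condition; from left to right, the back condition. -/
def IsBoundedMorphism {α β : Type*} (r : α → α → Prop) (s : β → β → Prop) (f : α → β) : Prop :=
  ∀ a c, s (f a) c ↔ ∃ b, r a b ∧ f b = c

namespace IsBoundedMorphism

variable {α β : Type*} {r : α → α → Prop} {s : β → β → Prop} {f : α → β}

theorem transGen (hf : IsBoundedMorphism r s f) :
    IsBoundedMorphism (Relation.TransGen r) (Relation.TransGen s) f := by
  intro a c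
  constructor
  · intro hac
    induction hac with
    | single hstep =>
      obtain ⟨b, hab, rfl⟩ := (hf a _).mp hstep
      exact ⟨b, .single hab, rfl⟩
    | tail _ hstep ih =>
      obtain ⟨b, hab, rfl⟩ := ih
      obtain ⟨b', hbb', rfl⟩ := (hf b _).mp hstep
      exact ⟨b', hab.tail hbb', rfl⟩
  · rintro ⟨b, hab, rfl⟩
    exact hab.lift f fun x y hxy => (hf x (f y)).mpr ⟨y, hxy, rfl⟩

theorem forall_apply_iff (hf : IsBoundedMorphism r s f) {a : α} {P : β → Prop} :
    (∀ c, s (f a) c → P c) ↔ ∀ b, r a b → P (f b) := by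
  simp only [hf a, forall_exists_index, and_imp, forall_apply_eq_imp_iff₂]

end IsBoundedMorphism

section Semantics

variable {Agent AtomP W : Type} {R : Agent → W → W → Prop} {V : AtomP → Set W} {w : W}
  {G : Set Agent} {φ ψ χ : Form Agent AtomP}

theorem sat_and : Sat (φ.and ψ) W R V w ↔ Sat φ W R V w ∧ Sat ψ W R V w := by
  simp only [Form.and, Sat, not_or, not_not]

theorem sat_imp : Sat (φ.imp ψ) W R V w ↔ (Sat φ W R V w → Sat ψ W R V w) := by
  simp only [Form.imp, Sat, imp_iff_not_or]

theorem sat_iff : Sat (φ.iff ψ) W R V w ↔ (Sat φ W R V w ↔ Sat ψ W R V w) := by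
  rw [Form.iff, sat_and, sat_imp, sat_imp, ← iff_iff_implies_and_implies]

/-- The relation `R_G^φ`: steps along `R_G` that end in a `φ`-world. -/
def RelativizedAccess (R : Agent → W → W → Prop) (V : AtomP → Set W) (G : Set Agent)
    (φ : Form Agent AtomP) (u v : W) : Prop :=
  (∃ i ∈ G, R i u v) ∧ Sat φ W R V v

/-- The domain `W^{!φ}` of the updated model, as a subtype of `W`. -/
abbrev AnnouncedWorld (R : Agent → W → W → Prop) (V : AtomP → Set W) (φ : Form Agent AtomP) :
    Type :=
  {v : W // Sat φ W R V v}

/-- The accessibility relations `R_i^{!φ}` of the updated model. -/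
def AnnouncedAccess (R : Agent → W → W → Prop) (V : AtomP → Set W) (φ : Form Agent AtomP)
    (i : Agent) (u v : AnnouncedWorld R V φ) : Prop :=
  R i u v

/-- The valuation `V^{!φ}` of the updated model. -/
def announcedVal (R : Agent → W → W → Prop) (V : AtomP → Set W) (φ : Form Agent AtomP)
    (p : AtomP) : Set (AnnouncedWorld R V φ) :=
  {v | (v : W) ∈ V p}

theorem sat_ck :
    Sat (.ck G φ ψ) W R V w ↔
      ∀ v, Relation.TransGen (RelativizedAccess R V G φ) w v → Sat ψ W R V v :=
  Iff.rfl

theorem sat_ann :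
    Sat (.ann φ ψ) W R V w ↔
      ∀ hw : Sat φ W R V w,
        Sat ψ (AnnouncedWorld R V φ) (AnnouncedAccess R V φ) (announcedVal R V φ) ⟨w, hw⟩ :=
  Iff.rfl

theorem sat_ann_coe (v : AnnouncedWorld R V φ) :
    Sat (.ann φ ψ) W R V v ↔
      Sat ψ (AnnouncedWorld R V φ) (AnnouncedAccess R V φ) (announcedVal R V φ) v :=
  sat_ann.trans (forall_prop_of_true v.2)

theorem isBoundedMorphism_announcedWorld_val :
    IsBoundedMorphism (RelativizedAccess (AnnouncedAccess R V φ) (announcedVal R V φ) G χ)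
      (RelativizedAccess R V G (φ.and (.ann φ χ))) Subtype.val := by
  intro u v
  constructor
  · rintro ⟨hstep, hv⟩
    obtain ⟨hφ, hχ⟩ := sat_and.mp hv
    exact ⟨⟨v, hφ⟩, ⟨hstep, sat_ann.mp hχ hφ⟩, rfl⟩
  · rintro ⟨v', ⟨hstep, hχ⟩, rfl⟩
    exact ⟨hstep, sat_and.mpr ⟨v'.2, (sat_ann_coe v').mpr hχ⟩⟩

theorem sat_ck_and_ann_coe (u : AnnouncedWorld R V φ) :
    Sat (.ck G (φ.and (.ann φ χ)) (.ann φ ψ)) W R V u ↔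
      Sat (.ck G χ ψ) (AnnouncedWorld R V φ) (AnnouncedAccess R V φ) (announcedVal R V φ) u := by
  rw [sat_ck, sat_ck, isBoundedMorphism_announcedWorld_val.transGen.forall_apply_iff]
  simp only [sat_ann_coe]

end Semantics

/-- Announcement–relativized-common-knowledge reduction:
`M,w ⊨ [!φ]C_G(χ | ψ) ↔ (φ → C_G(φ ∧ [!φ]χ | [!φ]ψ))`.
Here `Form.ck G χ ψ` denotes `C_G(χ | ψ)`. -/
theorem annRelativizedCK {Agent AtomP : Type} (W : Type) (hW : Nonempty W)
    (R : Agent → W → W → Prop) (V : AtomP → Set W) (G : Set Agent) (w : W)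
    (φ ψ χ : Form Agent AtomP) :
    Sat ((Form.ann φ (Form.ck G χ ψ)).iff
          (φ.imp (Form.ck G (φ.and (Form.ann φ χ)) (Form.ann φ ψ)))) W R V w := by
  rw [sat_iff, sat_ann, sat_imp]
  exact forall_congr' fun hw => (sat_ck_and_ann_coe ⟨w, hw⟩).symm
end

section
/- Positive visibility is entailed by negative visibility under S5: let M be an epistemic model over a group of agents A such that every accessibility relation R_i (i ∈ A) is an equivalence relation (reflexive, transitive and euclidean), and let a, b ∈ A and ws_a be an atomic proposition. If at every world it is common knowledge among A that ¬ws_a → K_b ¬ws_a (i.e., C_A(⊤ | ¬ws_a → K_b ¬ws_a) is true at every world of M, where ⊤ is a tautology), then at every world it is common knowledge among A that ws_a → K_b ws_a (i.e., C_A(⊤ | ws_a → K_b ws_a) is true at every world of M). -/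
/-! Suppose `b` considers `u` possible at a world `v` where `φ` holds. By symmetry `b` also
considers `v` possible at `u`, so `K_b ¬φ` fails at `u`. Since `u` is again reachable,
`¬φ → K_b ¬φ` holds at `u`, and its contrapositive yields `φ` there. -/

namespace Sat

variable {Agent AtomP W : Type} {R : Agent → W → W → Prop} {V : AtomP → Set W} {w : W}
  {φ χ ψ ψ' : Form Agent AtomP} {G : Set Agent} {i : Agent}

theorem imp_iff : Sat (φ.imp ψ) W R V w ↔ (Sat φ W R V w → Sat ψ W R V w) :=
  imp_iff_not_or.symm

theorem imp_mono_right (hψ : Sat ψ W R V w → Sat ψ' W R V w) (h : Sat (φ.imp ψ) W R V w) :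
    Sat (φ.imp ψ') W R V w :=
  imp_iff.2 (hψ ∘ imp_iff.1 h)

theorem know_top_imp_iff : Sat (.know i (Form.top.imp φ)) W R V w ↔ Sat (.know i φ) W R V w :=
  forall₂_congr fun _ _ => imp_iff.trans (forall_prop_of_true trivial)

theorem ck_mono (hψ : ∀ v, Sat ψ W R V v → Sat ψ' W R V v) (h : Sat (.ck G χ ψ) W R V w) :
    Sat (.ck G χ ψ') W R V w :=
  fun v hwv => hψ v (h v hwv)

theorem ck_know_of_ck (hi : i ∈ G) (h : Sat (.ck G χ ψ) W R V w) :
    Sat (.ck G χ (.know i (χ.imp ψ))) W R V w :=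
  fun _ hwv u hvu => imp_iff.2 fun hχ => h u (hwv.tail ⟨⟨i, hi, hvu⟩, hχ⟩)

/-- The modal axiom B, with the diamond spelled out as `¬K_i ¬`. -/
theorem know_neg_know_neg [Std.Symm (R i)] (h : Sat φ W R V w) :
    Sat (.know i (.neg (.know i (.neg φ)))) W R V w :=
  fun _ hwu hknow => hknow w (symm_of (R i) hwu) h

theorem imp_know_of_know_neg_imp_know_neg [Std.Symm (R i)]
    (h : Sat (.know i (χ.imp ((Form.neg φ).imp (.know i (.neg φ))))) W R V w) :
    Sat (φ.imp (.know i (χ.imp φ))) W R V w := by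
  refine imp_iff.2 fun hφ u hwu => imp_iff.2 fun hχ => ?_
  have negVisible : Sat (.neg φ) W R V u → Sat (.know i (.neg φ)) W R V u :=
    imp_iff.1 (imp_iff.1 (h u hwu) hχ)
  have notKnowNeg : ¬ Sat (.know i (.neg φ)) W R V u := know_neg_know_neg hφ u hwu
  exact not_not.1 (mt negVisible notKnowNeg)

end Sat

theorem positiveFromNegativeVisibility_general {Agent AtomP W : Type} {R : Agent → W → W → Prop}
    {V : AtomP → Set W} {G : Set Agent} {b : Agent} (hb : b ∈ G) [Std.Symm (R b)]
    {φ χ : Form Agent AtomP} {w : W}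
    (hneg : Sat (.ck G χ ((Form.neg φ).imp (.know b (.neg φ)))) W R V w) :
    Sat (.ck G χ (φ.imp (.know b (χ.imp φ)))) W R V w :=
  (hneg.ck_know_of_ck hb).ck_mono fun _ => Sat.imp_know_of_know_neg_imp_know_neg

/-- Positive visibility is entailed by negative visibility under S5:
if every accessibility relation is an equivalence relation and at every world it is
common knowledge among all agents that `¬ws_a → K_b ¬ws_a`, then at every world it
is common knowledge among all agents that `ws_a → K_b ws_a`.
Ordinary common knowledge of `ψ` among the group of all agents is `C_univ(⊤ | ψ)`,
encoded as `Form.ck Set.univ Form.top ψ`. -/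
theorem positiveFromNegativeVisibility {Agent AtomP : Type} (W : Type) (hW : Nonempty W)
    (R : Agent → W → W → Prop) (V : AtomP → Set W)
    (hS5 : ∀ i : Agent, Equivalence (R i))
    (a b : Agent) (wsa : AtomP)
    (hneg : ∀ w : W,
      Sat (Form.ck Set.univ Form.top
            ((Form.neg (Form.atom wsa)).imp (Form.know b (Form.neg (Form.atom wsa)))))
          W R V w) :
    ∀ w : W,
      Sat (Form.ck Set.univ Form.top
            ((Form.atom wsa).imp (Form.know b (Form.atom wsa)))) W R V w := by
  have := (hS5 b).stdSymm
  exact fun w => (positiveFromNegativeVisibility_general (Set.mem_univ b) (hneg w)).ck_mono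
    fun _ => Sat.imp_mono_right Sat.know_top_imp_iff.1
end

section
/- The wise men puzzle with four agents: let M be an epistemic model over the group of agents A = {a, b, c, d} in which every accessibility relation is an equivalence relation (reflexive, transitive and euclidean), and let ws_a, ws_b, ws_c, ws_d be atomic propositions. Assume that at every world of M the following are common knowledge among A (in the sense of C_A(⊤|·) holding at every world): (1) ws_a ∨ ws_b ∨ ws_c ∨ ws_d; and (2) for every ordered pair of distinct agents x, y ∈ A, ¬ws_x → K_y ¬ws_x. Then at every world w of M it holds that M,w ⊨ [!¬K_a ws_a]([!¬K_b ws_b]([!¬K_c ws_c](K_d ws_d))); that is, after a, b and c have each publicly announced that they do not know they have a white spot, agent d knows that he has a white spot. -/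
/-- The four wise men `a`, `b`, `c`, `d`. -/
inductive WiseMan : Type
  | a | b | c | d
  deriving DecidableEq

/-! Suppose it is commonly known that somebody has a spot, and that each agent notices the absence
of spots on those who speak after him. If nobody after the first speaker `x` had a spot, then `x`
would notice this and know that he has one himself; so the announcement of his ignorance makes it
commonly known that one of the later agents has a spot. Everything used so far remains common
knowledge after the announcement, and the argument repeats until only the last agent is left. -/

/-- The disjunction of a list of atomic propositions, with `¬⊤` as the empty disjunction. -/
def Form.anyAtom {Agent AtomP : Type} (l : List AtomP) : Form Agent AtomP :=
  l.foldr (fun p φ => (Form.atom p).or φ) (.neg .top)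

/-- The formula `¬p → K_x ¬p`: agent `x` notices when `p` is false. -/
def Form.noticesAbsence {Agent AtomP : Type} (x : Agent) (p : AtomP) : Form Agent AtomP :=
  (Form.neg (.atom p)).imp (.know x (.neg (.atom p)))

/-- The formula `[!¬K_x₁ ws_x₁] ⋯ [!¬K_xₙ ws_xₙ] ψ`: after `x₁, …, xₙ` have announced in turn that
they do not know that they have a white spot, `ψ` holds. -/
def Form.annIgnorance {Agent AtomP : Type} (ws : Agent → AtomP) (l : List Agent)
    (ψ : Form Agent AtomP) : Form Agent AtomP :=
  l.foldr (fun x φ => .ann (.neg (.know x (.atom (ws x)))) φ) ψ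

/-- The relation `(⋃ i ∈ G, R i)⁺` along which common knowledge of the group `G` is evaluated. -/
def GroupReach {Agent W : Type} (R : Agent → W → W → Prop) (G : Set Agent) : W → W → Prop :=
  Relation.TransGen fun u v => ∃ i ∈ G, R i u v

section

variable {Agent AtomP W : Type} {R : Agent → W → W → Prop} {V : AtomP → Set W} {w : W}
  {G : Set Agent} {x : Agent} {φ ψ : Form Agent AtomP} {p : AtomP} {ps : List AtomP}

theorem sat_ck_top :
    Sat (.ck G .top ψ) W R V w ↔ ∀ v, GroupReach R G w v → Sat ψ W R V v := by
  simp only [Sat, and_true, GroupReach]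

theorem sat_anyAtom : Sat (.anyAtom ps) W R V w ↔ ∃ p ∈ ps, w ∈ V p := by
  induction ps with
  | nil => simp [Form.anyAtom, Sat]
  | cons p ps ih => simpa [Form.anyAtom, Sat] using or_congr_right ih

theorem sat_noticesAbsence :
    Sat (.noticesAbsence x p) W R V w ↔ (w ∉ V p → ∀ v, R x w v → v ∉ V p) := by
  simp only [Form.noticesAbsence, Form.imp, Sat, or_iff_not_imp_left, not_not]

theorem sat_ann_ck_of_sat_ck_ann (h : Sat (.ck G .top (.ann φ ψ)) W R V w) :
    Sat (.ann φ (.ck G .top ψ)) W R V w := by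
  intro hw
  refine sat_ck_top.2 fun v hv => ?_
  have hreach : GroupReach R G w v.1 :=
    Relation.TransGen.lift Subtype.val (by exact fun _ _ => id) _ _ hv
  exact sat_ck_top.1 h v.1 hreach v.2

theorem sat_ann_noticesAbsence (h : Sat (.noticesAbsence x p) W R V w) :
    Sat (.ann φ (.noticesAbsence x p)) W R V w :=
  fun _ => sat_noticesAbsence.2 fun hp v hv => sat_noticesAbsence.1 h hp v.1 hv

theorem sat_ann_not_know_anyAtom (hany : Sat (.know x (.anyAtom (p :: ps))) W R V w)
    (hnotice : ∀ q ∈ ps, Sat (.noticesAbsence x q) W R V w) :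
    Sat (.ann (.neg (.know x (.atom p))) (.anyAtom ps)) W R V w := by
  intro hignorant
  refine sat_anyAtom.2 ?_
  by_contra! hnone
  refine hignorant fun v hv => ?_
  obtain ⟨q, hq, hqv⟩ := sat_anyAtom.1 (hany v hv)
  rcases List.mem_cons.1 hq with rfl | hq
  · exact hqv
  · exact absurd hqv (sat_noticesAbsence.1 (hnotice q hq) (hnone q hq) v hv)

theorem sat_ann_ck_anyAtom (hx : x ∈ G) (hany : Sat (.ck G .top (.anyAtom (p :: ps))) W R V w)
    (hnotice : ∀ q ∈ ps, Sat (.ck G .top (.noticesAbsence x q)) W R V w) :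
    Sat (.ann (.neg (.know x (.atom p))) (.ck G .top (.anyAtom ps))) W R V w :=
  sat_ann_ck_of_sat_ck_ann <| sat_ck_top.2 fun v hv =>
    sat_ann_not_know_anyAtom (fun u hu => sat_ck_top.1 hany u (hv.tail ⟨x, hx, hu⟩))
      fun q hq => sat_ck_top.1 (hnotice q hq) v hv

theorem sat_ann_ck_noticesAbsence (h : Sat (.ck G .top (.noticesAbsence x p)) W R V w) :
    Sat (.ann φ (.ck G .top (.noticesAbsence x p))) W R V w :=
  sat_ann_ck_of_sat_ck_ann <| sat_ck_top.2 fun v hv =>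
    sat_ann_noticesAbsence (sat_ck_top.1 h v hv)

end

theorem wiseMenPuzzle_general {Agent AtomP W : Type} {R : Agent → W → W → Prop}
    {V : AtomP → Set W} {w : W} {G : Set Agent} (ws : Agent → AtomP) (l : List Agent) (z : Agent)
    (hG : ∀ x ∈ l ++ [z], x ∈ G)
    (hany : Sat (.ck G .top (.anyAtom ((l ++ [z]).map ws))) W R V w)
    (hnotice : (l ++ [z]).Pairwise fun x y =>
      Sat (.ck G .top (.noticesAbsence x (ws y))) W R V w) :
    Sat (.annIgnorance ws l (.know z (.atom (ws z)))) W R V w := by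
  induction l generalizing W with
  | nil =>
    intro v hv
    have hreach : GroupReach R G w v := .single ⟨z, hG z (by simp), hv⟩
    simpa [sat_anyAtom, Sat] using sat_ck_top.1 hany v hreach
  | cons x l ih =>
    obtain ⟨hx, hl⟩ := List.forall_mem_cons.1 hG
    obtain ⟨hnotice_x, hnotice_l⟩ := List.pairwise_cons.1 hnotice
    exact fun hw => ih hl
      (sat_ann_ck_anyAtom hx hany (List.forall_mem_map.2 hnotice_x) hw)
      (hnotice_l.imp fun h => sat_ann_ck_noticesAbsence h hw)

/-- The wise men puzzle with four agents.  The agents are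
`A = {a,b,c,d}`; the atomic proposition `ws x` ("x has a white spot") is encoded by
the atom `x : WiseMan` itself.  Assume every accessibility relation is an equivalence
relation and that at every world the following are common knowledge among `A`
(`C_A(⊤|·)`, encoded as `Form.ck Set.univ Form.top ·`):
(1) `ws_a ∨ ws_b ∨ ws_c ∨ ws_d`, and
(2) for all distinct `x y ∈ A`, `¬ws_x → K_y ¬ws_x`.
Then at every world, `[!¬K_a ws_a][!¬K_b ws_b][!¬K_c ws_c] K_d ws_d` holds. -/
theorem wiseMenPuzzle (W : Type) (hW : Nonempty W)
    (R : WiseMan → W → W → Prop) (V : WiseMan → Set W)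
    (hS5 : ∀ i : WiseMan, Equivalence (R i))
    (h1 : ∀ w : W,
      Sat (Form.ck Set.univ Form.top
            ((((Form.atom WiseMan.a).or (Form.atom WiseMan.b)).or
                (Form.atom WiseMan.c)).or (Form.atom WiseMan.d))) W R V w)
    (h2 : ∀ x y : WiseMan, x ≠ y → ∀ w : W,
      Sat (Form.ck Set.univ Form.top
            ((Form.neg (Form.atom x)).imp (Form.know y (Form.neg (Form.atom x)))))
          W R V w) :
    ∀ w : W,
      Sat (Form.ann (Form.neg (Form.know WiseMan.a (Form.atom WiseMan.a)))
            (Form.ann (Form.neg (Form.know WiseMan.b (Form.atom WiseMan.b)))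
              (Form.ann (Form.neg (Form.know WiseMan.c (Form.atom WiseMan.c)))
                (Form.know WiseMan.d (Form.atom WiseMan.d))))) W R V w :=
  fun w => wiseMenPuzzle_general (Agent := WiseMan) id [.a, .b, .c] .d (fun _ _ => trivial)
    (fun v hv => by simpa [sat_anyAtom, Sat, or_assoc] using h1 w v hv)
    ((by decide : [WiseMan.a, .b, .c, .d].Nodup).imp fun hne => h2 _ _ hne.symm w)
end
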